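/- Let N ≥ 5, α ∈ (0, N), and p > (N+α)/(N−4). Then there is a constant C > 0 such that for every u ∈ D^{2,2}(G): ∑_{x∈G} (R_α ∗ |u|^p)(x)·|u(x)|^p ≤ C·( ∑_{x∈G} |Δu(x)|² )^p. -/

import Mathlib

open Filter Topology

noncomputable section

namespace Choquard

variable {G : Type*}

/-- The word metric on the Cayley graph of `(G, S)`: the least `k` such that
`y = x * s₁ * ⋯ * s_k` with each `sᵢ ∈ S`. -/
def wordDist [Group G] (S : Finset G) (x y : G) : ℕ :=
  sInf {k : ℕ | ∃ l : List G, (∀ s ∈ l, s ∈ S) ∧ l.length = k ∧ y = x * l.prod}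

/-- Convolution against a kernel: `(R ∗ f)(x) = ∑_{y ∈ G} R(x,y) f(y)`. -/
def conv (R : G → G → ℝ) (f : G → ℝ) (x : G) : ℝ := ∑' y, R x y * f y

/-- The `ℓ^q(G)` norm of `u`. -/
def lpNorm (q : ℝ) (u : G → ℝ) : ℝ := (∑' x, |u x| ^ q) ^ (1 / q)

/-- `u ∈ ℓ^q(G)`. -/
def Memlp (q : ℝ) (u : G → ℝ) : Prop := Summable fun x : G => |u x| ^ q

/-- `|∇u(x)|_p^p = ∑_{y ∼ x} |u(y) − u(x)|^p`, where `y ∼ x` iff `y = x * s`, `s ∈ S`. -/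
def gradP [Group G] (S : Finset G) (p : ℝ) (u : G → ℝ) (x : G) : ℝ :=
  ∑ s ∈ S, |u (x * s) - u x| ^ p

/-- The `D^{1,p}` norm `(∑_x ∑_{y ∼ x} |u(y) − u(x)|^p)^{1/p}`. -/
def D1Norm [Group G] (S : Finset G) (p : ℝ) (u : G → ℝ) : ℝ :=
  (∑' x, gradP S p u x) ^ (1 / p)

/-- `u ∈ D^{1,p}(G) = {u ∈ ℓ^{Np/(N−p)}(G) : ‖u‖_{D^{1,p}} < ∞}`. -/
def MemD1p [Group G] (S : Finset G) (N : ℕ) (p : ℝ) (u : G → ℝ) : Prop :=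
  Memlp ((N : ℝ) * p / ((N : ℝ) - p)) u ∧ Summable (gradP S p u)

/-- `|∇u(x)|₂² = ∑_{y ∼ x} (u(y) − u(x))²`. -/
def gradSq [Group G] (S : Finset G) (u : G → ℝ) (x : G) : ℝ :=
  ∑ s ∈ S, (u (x * s) - u x) ^ 2

/-- The `D^{1,2}` norm. -/
def D12Norm [Group G] (S : Finset G) (u : G → ℝ) : ℝ :=
  (∑' x, gradSq S u x) ^ ((1 : ℝ) / 2)

/-- `u ∈ D^{1,2}(G) = {u ∈ ℓ^{2N/(N−2)}(G) : ‖u‖_{D^{1,2}} < ∞}`. -/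
def MemD12 [Group G] (S : Finset G) (N : ℕ) (u : G → ℝ) : Prop :=
  Memlp (2 * (N : ℝ) / ((N : ℝ) - 2)) u ∧ Summable (gradSq S u)

/-- The graph Laplacian `Δu(x) = ∑_{y ∼ x} (u(y) − u(x))`. -/
def lap [Group G] (S : Finset G) (u : G → ℝ) (x : G) : ℝ :=
  ∑ s ∈ S, (u (x * s) - u x)

/-- `u ∈ D^{2,2}(G) = {u ∈ ℓ^{2N/(N−4)}(G) : ‖Δu‖_{ℓ²} < ∞}`. -/
def MemD22 [Group G] (S : Finset G) (N : ℕ) (u : G → ℝ) : Prop :=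
  Memlp (2 * (N : ℝ) / ((N : ℝ) - 4)) u ∧ Summable fun x => (lap S u x) ^ 2

/-- `u ∈ D^{2,p}(G) = {u ∈ ℓ^{Np/(N−2p)}(G) : ‖Δu‖_{ℓ^p} < ∞}`. -/
def MemD2p [Group G] (S : Finset G) (N : ℕ) (p : ℝ) (u : G → ℝ) : Prop :=
  Memlp ((N : ℝ) * p / ((N : ℝ) - 2 * p)) u ∧ Summable fun x => |lap S u x| ^ p

/-- The nonlocal energy `∑_{x ∈ G} (R_α ∗ |u|^p)(x) |u(x)|^p`. -/
def energy (R : G → G → ℝ) (p : ℝ) (u : G → ℝ) : ℝ :=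
  ∑' x, conv R (fun y => |u y| ^ p) x * |u x| ^ p

/-- The optimal constant `K` of the Sobolev-type inequality. -/
def bestK [Group G] (S : Finset G) (N : ℕ) (R : G → G → ℝ) (p : ℝ) : ℝ :=
  sSup {t : ℝ | ∃ u : G → ℝ, MemD12 S N u ∧ D12Norm S u = 1 ∧ t = energy R p u}

/-- The discrete `p`-Laplacian. -/
def pLap [Group G] (S : Finset G) (p : ℝ) (u : G → ℝ) (x : G) : ℝ :=
  ∑ s ∈ S, |u (x * s) - u x| ^ (p - 2) * (u (x * s) - u x)

/-- The cutoff `Ψ_r`, the indicator of `{x : d(x,e) ≥ r + 1}`. -/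
def cutoff [Group G] (S : Finset G) (r : ℕ) (x : G) : ℝ :=
  if r + 1 ≤ wordDist S 1 x then 1 else 0

/-!
Let `P = I + κΔ` be a lazy random walk on the Cayley graph. The pseudo-Poincaré inequality and the
lower volume bound `#B(n) ≳ n^D` give a Nash inequality, and Nash's iteration turns it into
`‖Pⁿδₓ‖₂² ≲ n^{-D/2}`. Hence `Pⁿu → 0` pointwise for `u ∈ ℓ^r`, so that `u = ∑ₖ Pᵏ(u − Pu)` with
`u − Pu = −κΔu`. Interpolating between `ℓ²` and `ℓ^∞`, the series `∑ₖ ‖Pᵏf‖_q` converges for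
`f ∈ ℓ²` when `q > 2D/(D−4)`, which gives the second-order Sobolev inequality `‖u‖_q ≲ ‖Δu‖₂`.

The upper volume bound puts the kernel `max(1, |g|)^{α−D}` into `ℓ^s` for `s > D/(D−α)`, so Young's
inequality bounds the energy by `‖|u|^p‖_r²` for `r < 2D/(D+α)`. The condition `p > (D+α)/(D−4)` is
what makes room for such an `r` with `pr > 2D/(D−4)`. Because both exponent ranges are open, neither
the endpoint Sobolev inequality nor the weak-type form of Young's inequality is needed.
-/

section WordMetric

variable [Group G] {S : Finset G}

theorem exists_list_prod_eq (hS_gen : Subgroup.closure (S : Set G) = ⊤)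
    (hS_sym : ∀ s ∈ S, s⁻¹ ∈ S) (g : G) : ∃ l : List G, (∀ s ∈ l, s ∈ S) ∧ l.prod = g := by
  have hg : g ∈ (Subgroup.closure (S : Set G)).toSubmonoid := by rw [hS_gen]; trivial
  rw [Subgroup.closure_toSubmonoid] at hg
  obtain ⟨l, hl, rfl⟩ := Submonoid.exists_list_of_mem_closure hg
  refine ⟨l, fun s hs => (hl s hs).elim id fun h => ?_, rfl⟩
  simpa only [inv_inv] using hS_sym _ h

theorem exists_list_length_eq_wordDist (hS_gen : Subgroup.closure (S : Set G) = ⊤)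
    (hS_sym : ∀ s ∈ S, s⁻¹ ∈ S) (x y : G) :
    ∃ l : List G, (∀ s ∈ l, s ∈ S) ∧ l.length = wordDist S x y ∧ y = x * l.prod := by
  obtain ⟨l, hl, hprod⟩ := exists_list_prod_eq hS_gen hS_sym (x⁻¹ * y)
  exact Nat.sInf_mem (s := {k | ∃ l : List G, (∀ s ∈ l, s ∈ S) ∧ l.length = k ∧ y = x * l.prod})
    ⟨l.length, l, hl, rfl, by rw [hprod, mul_inv_cancel_left]⟩

theorem wordDist_eq_wordDist_one (S : Finset G) (x y : G) :
    wordDist S x y = wordDist S 1 (x⁻¹ * y) := by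
  simp only [wordDist, one_mul, inv_mul_eq_iff_eq_mul]

theorem wordDist_self (S : Finset G) (x : G) : wordDist S x x = 0 :=
  Nat.sInf_eq_zero.mpr (Or.inl ⟨[], by simp⟩)

theorem one_le_wordDist (hS_gen : Subgroup.closure (S : Set G) = ⊤)
    (hS_sym : ∀ s ∈ S, s⁻¹ ∈ S) {x y : G} (hxy : x ≠ y) : 1 ≤ wordDist S x y := by
  obtain ⟨l, -, hlen, hy⟩ := exists_list_length_eq_wordDist hS_gen hS_sym x y
  refine Nat.one_le_iff_ne_zero.mpr fun h => hxy ?_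
  rw [h, List.length_eq_zero_iff] at hlen
  simpa only [hlen, List.prod_nil, mul_one] using hy.symm

/-- The number of elements of the ball of radius `n` about the identity for the word metric. -/
def ballVolume (S : Finset G) (n : ℕ) : ℕ := Nat.card {x : G // wordDist S 1 x ≤ n}

theorem finite_wordDist_le (hS_gen : Subgroup.closure (S : Set G) = ⊤)
    (hS_sym : ∀ s ∈ S, s⁻¹ ∈ S) (n : ℕ) : {x : G | wordDist S 1 x ≤ n}.Finite := by
  refine ((List.finite_length_le S n).image fun l => (l.map Subtype.val).prod).subset fun x hx => ?_
  obtain ⟨l, hl, hlen, rfl⟩ := exists_list_length_eq_wordDist hS_gen hS_sym 1 x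
  lift l to List S using hl
  refine ⟨l, ?_, (one_mul _).symm⟩
  rw [List.length_map] at hlen
  exact hlen.trans_le hx

end WordMetric

section Dirichlet

variable [Group G]

theorem summable_comp_mul_right {f : G → ℝ} (hf : Summable f) (g : G) :
    Summable fun x => f (x * g) :=
  (Equiv.mulRight g).summable_iff.mpr hf

theorem tsum_comp_mul_right (f : G → ℝ) (g : G) : ∑' x, f (x * g) = ∑' x, f x :=
  (Equiv.mulRight g).tsum_eq f

theorem hasSum_comp_mul_right_sub {f : G → ℝ} (hf : Summable f) (g : G) :
    HasSum (fun x => f (x * g) - f x) 0 := by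
  have h := (summable_comp_mul_right hf g).hasSum.sub hf.hasSum
  rwa [tsum_comp_mul_right, sub_self] at h

theorem summable_sq_comp_mul_right_sub {f : G → ℝ} (hf : Summable fun x => f x ^ 2) (g : G) :
    Summable fun x => (f (x * g) - f x) ^ 2 := by
  refine .of_nonneg_of_le (fun x => sq_nonneg _) (fun x => ?_)
    (((summable_comp_mul_right hf g).add hf).mul_left 2)
  nlinarith only [sq_nonneg (f (x * g) + f x)]

theorem gradSq_nonneg (S : Finset G) (f : G → ℝ) (x : G) : 0 ≤ gradSq S f x :=
  Finset.sum_nonneg fun _ _ => sq_nonneg _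

theorem summable_gradSq (S : Finset G) {f : G → ℝ} (hf : Summable fun x => f x ^ 2) :
    Summable (gradSq S f) :=
  summable_sum fun s _ => summable_sq_comp_mul_right_sub hf s

/-- The Dirichlet energy `∑ₓ ∑_{y ∼ x} (f(y) − f(x))²`, in which every undirected edge is counted
twice. -/
def dirichletEnergy (S : Finset G) (f : G → ℝ) : ℝ := ∑' x, gradSq S f x

theorem dirichletEnergy_nonneg (S : Finset G) (f : G → ℝ) : 0 ≤ dirichletEnergy S f :=
  tsum_nonneg (gradSq_nonneg S f)

theorem tsum_sq_comp_mul_right_sub_le_dirichletEnergy {S : Finset G} {f : G → ℝ}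
    (hf : Summable fun x => f x ^ 2) {s : G} (hs : s ∈ S) :
    ∑' x, (f (x * s) - f x) ^ 2 ≤ dirichletEnergy S f :=
  (summable_sq_comp_mul_right_sub hf s).tsum_le_tsum
    (fun x => Finset.single_le_sum (f := fun s => (f (x * s) - f x) ^ 2)
      (fun _ _ => sq_nonneg _) hs) (summable_gradSq S hf)

theorem sq_comp_mul_list_prod_sub_le (f : G → ℝ) (l : List G) (x : G) :
    (f (x * l.prod) - f x) ^ 2 ≤ l.length * ∑ i : Fin l.length,
      (f (x * (l.take i).prod * l[i]) - f (x * (l.take i).prod)) ^ 2 := by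
  have htel : f (x * l.prod) - f x = ∑ i : Fin l.length,
      (f (x * (l.take i).prod * l[i]) - f (x * (l.take i).prod)) := by
    have h := Finset.sum_range_sub (fun i => f (x * (l.take i).prod)) l.length
    rw [List.take_length, List.take_zero, List.prod_nil, mul_one] at h
    rw [← h, Finset.sum_range]
    refine Finset.sum_congr rfl fun i _ => ?_
    rw [List.prod_take_succ _ _ i.2, mul_assoc, Fin.getElem_fin]
  rw [htel]
  simpa only [Finset.card_univ, Fintype.card_fin] using
    sq_sum_le_card_mul_sum_sq (s := Finset.univ) (f := fun i : Fin l.length =>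
      f (x * (l.take i).prod * l[i]) - f (x * (l.take i).prod))

theorem tsum_sq_comp_mul_list_prod_sub_le {S : Finset G} {f : G → ℝ}
    (hf : Summable fun x => f x ^ 2) {l : List G} (hl : ∀ s ∈ l, s ∈ S) :
    ∑' x, (f (x * l.prod) - f x) ^ 2 ≤ (l.length : ℝ) ^ 2 * dirichletEnergy S f := by
  have hstep (g s : G) : Summable fun x => (f (x * g * s) - f (x * g)) ^ 2 :=
    summable_comp_mul_right (summable_sq_comp_mul_right_sub hf s) g
  calc ∑' x, (f (x * l.prod) - f x) ^ 2
      ≤ ∑' x, l.length * ∑ i : Fin l.length,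
          (f (x * (l.take i).prod * l[i]) - f (x * (l.take i).prod)) ^ 2 :=
        (summable_sq_comp_mul_right_sub hf _).tsum_le_tsum (sq_comp_mul_list_prod_sub_le f l)
          ((summable_sum fun i _ => hstep _ _).mul_left _)
    _ = l.length * ∑ i : Fin l.length, ∑' x, (f (x * l[i]) - f x) ^ 2 := by
        rw [tsum_mul_left, Summable.tsum_finsetSum fun i _ => hstep _ _]
        congr! 2 with i
        exact tsum_comp_mul_right (fun x => (f (x * l[i]) - f x) ^ 2) _
    _ ≤ l.length * ∑ _i : Fin l.length, dirichletEnergy S f := by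
        gcongr with i
        exact tsum_sq_comp_mul_right_sub_le_dirichletEnergy hf (hl _ (List.getElem_mem i.2))
    _ = (l.length : ℝ) ^ 2 * dirichletEnergy S f := by
        rw [Finset.sum_const, Finset.card_univ, Fintype.card_fin, nsmul_eq_mul]
        ring

end Dirichlet

section LazyWalk

variable (S : Finset G)

/-- The step size `(2|S| + 1)⁻¹` of the lazy walk. It only matters that it is positive and small
enough for the walk to stay where it is with probability at least `1/2`. -/
def stepSize : ℝ := (2 * (S.card : ℝ) + 1)⁻¹

theorem stepSize_pos : 0 < stepSize S := by
  unfold stepSize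
  positivity

theorem stepSize_mul_card_le : stepSize S * S.card ≤ 1 / 2 := by
  rw [stepSize, inv_mul_le_iff₀ (by positivity)]
  linarith

variable [Group G]

/-- The transition operator `P = I + κΔ` of the lazy random walk on the Cayley graph, where `κ` is
`stepSize S`. -/
def lazyWalk : Module.End ℝ (G → ℝ) where
  toFun f x := f x + stepSize S * lap S f x
  map_add' f g := by
    ext x
    simp only [lap, Pi.add_apply, add_sub_add_comm, Finset.sum_add_distrib]
    ring
  map_smul' c f := by
    ext x
    simp only [lap, Pi.smul_apply, smul_eq_mul, ← mul_sub, ← Finset.mul_sum, RingHom.id_apply]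
    ring

theorem lazyWalk_apply (f : G → ℝ) (x : G) :
    lazyWalk S f x = f x + stepSize S * lap S f x := rfl

theorem lazyWalk_pow_succ_apply (n : ℕ) (f : G → ℝ) :
    (lazyWalk S ^ (n + 1)) f = lazyWalk S ((lazyWalk S ^ n) f) := by
  rw [pow_succ', Module.End.mul_apply]

theorem lazyWalk_apply_eq_convex_combination (f : G → ℝ) (x : G) :
    lazyWalk S f x = (1 - stepSize S * S.card) * f x + ∑ s ∈ S, stepSize S * f (x * s) := by
  rw [lazyWalk_apply, lap, Finset.sum_sub_distrib, Finset.sum_const, nsmul_eq_mul, ← Finset.mul_sum]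
  ring

theorem lap_sq_le (f : G → ℝ) (x : G) : lap S f x ^ 2 ≤ S.card * gradSq S f x :=
  sq_sum_le_card_mul_sum_sq

theorem lazyWalk_sq_le (f : G → ℝ) (x : G) :
    lazyWalk S f x ^ 2 ≤ f x ^ 2 + stepSize S * lap S (fun y => f y ^ 2) x
      - stepSize S / 2 * gradSq S f x := by
  have hproduct : lap S (fun y => f y ^ 2) x = 2 * f x * lap S f x + gradSq S f x := by
    rw [lap, lap, gradSq, Finset.mul_sum, ← Finset.sum_add_distrib]
    exact Finset.sum_congr rfl fun s _ => by ring
  have hκ := stepSize_pos S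
  have hquad : stepSize S ^ 2 * lap S f x ^ 2 ≤ stepSize S / 2 * gradSq S f x :=
    calc stepSize S ^ 2 * lap S f x ^ 2 ≤ stepSize S ^ 2 * (S.card * gradSq S f x) := by
          gcongr
          exact lap_sq_le S f x
      _ = stepSize S * (stepSize S * S.card) * gradSq S f x := by ring
      _ ≤ stepSize S * (1 / 2) * gradSq S f x := by
          gcongr
          · exact gradSq_nonneg S f x
          · exact stepSize_mul_card_le S
      _ = stepSize S / 2 * gradSq S f x := by ring
  rw [hproduct, lazyWalk_apply]
  linarith

variable {S} {f : G → ℝ}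

theorem hasSum_lap (hf : Summable f) : HasSum (lap S f) 0 := by
  have h := hasSum_sum (s := S) fun s _ => hasSum_comp_mul_right_sub hf s
  rwa [Finset.sum_const_zero] at h

theorem hasSum_sq_add_lap_sub_gradSq (hf : Summable fun x => f x ^ 2) :
    HasSum (fun x => f x ^ 2 + stepSize S * lap S (fun y => f y ^ 2) x
      - stepSize S / 2 * gradSq S f x)
      (∑' x, f x ^ 2 - stepSize S / 2 * dirichletEnergy S f) := by
  have h := (hf.hasSum.add ((hasSum_lap (S := S) hf).mul_left (stepSize S))).sub
    ((summable_gradSq S hf).hasSum.mul_left (stepSize S / 2))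
  rwa [mul_zero, add_zero] at h

theorem summable_lazyWalk_sq (hf : Summable fun x => f x ^ 2) :
    Summable fun x => lazyWalk S f x ^ 2 :=
  .of_nonneg_of_le (fun _ => sq_nonneg _) (lazyWalk_sq_le S f)
    (hasSum_sq_add_lap_sub_gradSq hf).summable

theorem tsum_lazyWalk_sq_le (hf : Summable fun x => f x ^ 2) :
    ∑' x, lazyWalk S f x ^ 2 ≤ ∑' x, f x ^ 2 - stepSize S / 2 * dirichletEnergy S f :=
  hasSum_le (lazyWalk_sq_le S f) (summable_lazyWalk_sq hf).hasSum
    (hasSum_sq_add_lap_sub_gradSq hf)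

theorem summable_lazyWalk_pow_sq (hf : Summable fun x => f x ^ 2) (n : ℕ) :
    Summable fun x => (lazyWalk S ^ n) f x ^ 2 := by
  induction n with
  | zero => exact hf
  | succ n ih =>
    rw [lazyWalk_pow_succ_apply]
    exact summable_lazyWalk_sq ih

theorem tsum_lazyWalk_pow_sq_le (hf : Summable fun x => f x ^ 2) (n : ℕ) :
    ∑' x, (lazyWalk S ^ n) f x ^ 2 ≤ ∑' x, f x ^ 2 := by
  induction n with
  | zero => exact le_rfl
  | succ n ih =>
    rw [lazyWalk_pow_succ_apply]
    have hstep := tsum_lazyWalk_sq_le (S := S) (summable_lazyWalk_pow_sq (S := S) hf n)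
    have hdrop := mul_nonneg (half_pos (stepSize_pos S)).le
      (dirichletEnergy_nonneg S ((lazyWalk S ^ n) f))
    linarith

end LazyWalk

section Density

variable {f : G → ℝ}

/-- A probability density with respect to the counting measure on `G`. -/
structure IsDensity (f : G → ℝ) : Prop where
  nonneg : ∀ x, 0 ≤ f x
  hasSum : HasSum f 1

namespace IsDensity

theorem sq_le (hf : IsDensity f) (x : G) : f x ^ 2 ≤ f x := by
  have hle : f x ≤ 1 := le_hasSum hf.hasSum x fun y _ => hf.nonneg y
  rw [sq]
  exact mul_le_of_le_one_left (hf.nonneg x) hle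

theorem summable_sq (hf : IsDensity f) : Summable fun x => f x ^ 2 :=
  .of_nonneg_of_le (fun _ => sq_nonneg _) hf.sq_le hf.hasSum.summable

theorem tsum_sq_le_one (hf : IsDensity f) : ∑' x, f x ^ 2 ≤ 1 :=
  hasSum_le hf.sq_le hf.summable_sq.hasSum hf.hasSum

theorem tsum_sq_pos (hf : IsDensity f) : 0 < ∑' x, f x ^ 2 := by
  obtain ⟨x, hx⟩ : ∃ x, f x ≠ 0 := by
    by_contra! hzero
    exact zero_ne_one ((hasSum_zero.congr_fun fun x => (hzero x)).unique hf.hasSum)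
  exact hf.summable_sq.tsum_pos (fun _ => sq_nonneg _) x (by positivity)

variable [Group G]

theorem map_lazyWalk (hf : IsDensity f) (S : Finset G) : IsDensity (lazyWalk S f) where
  nonneg x := by
    rw [lazyWalk_apply_eq_convex_combination]
    have hstay : 0 ≤ 1 - stepSize S * S.card := by linarith [stepSize_mul_card_le S]
    exact add_nonneg (mul_nonneg hstay (hf.nonneg x))
      (Finset.sum_nonneg fun s _ => mul_nonneg (stepSize_pos S).le (hf.nonneg _))
  hasSum := by
    have h := hf.hasSum.add ((hasSum_lap (S := S) hf.hasSum.summable).mul_left (stepSize S))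
    rwa [mul_zero, add_zero] at h

theorem map_lazyWalk_pow (hf : IsDensity f) (S : Finset G) (n : ℕ) :
    IsDensity ((lazyWalk S ^ n) f) := by
  induction n with
  | zero => exact hf
  | succ n ih =>
    rw [lazyWalk_pow_succ_apply]
    exact ih.map_lazyWalk S

theorem sum_tsum_mul_comp_mul_right_le_one (hf : IsDensity f) (B : Finset G)
    (hsum : ∀ g, Summable fun x => f x * f (x * g)) :
    ∑ g ∈ B, ∑' x, f x * f (x * g) ≤ 1 := by
  refine hasSum_le (fun x => ?_) (hasSum_sum fun g _ => (hsum g).hasSum) hf.hasSum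
  have htrans : HasSum (fun g => f (x * g)) 1 := (Equiv.mulLeft x).hasSum_iff.mpr hf.hasSum
  rw [← Finset.mul_sum]
  exact mul_le_of_le_one_right (hf.nonneg x)
    (sum_le_hasSum B (fun g _ => hf.nonneg _) htrans)

end IsDensity

variable [Group G]

theorem hasSum_mul_comp_mul_right (hf : Summable fun x => f x ^ 2) (g : G) :
    HasSum (fun x => f x * f (x * g)) (∑' x, f x ^ 2 - (∑' x, (f (x * g) - f x) ^ 2) / 2) := by
  have h := (hf.hasSum.add ((hasSum_comp_mul_right_sub hf g).div_const 2)).sub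
    ((summable_sq_comp_mul_right_sub hf g).hasSum.div_const 2)
  rw [zero_div, add_zero] at h
  exact h.congr_fun fun x => by ring

variable {S : Finset G}

/-- The correlations `∑ₓ f(x) f(xg)` sum over `g` to `(∑ f)² = 1`, while by the pseudo-Poincaré
inequality each is at least `‖f‖₂² − |g|² E(f) / 2`. -/
theorem IsDensity.ballVolume_mul_le_one (hf : IsDensity f)
    (hS_gen : Subgroup.closure (S : Set G) = ⊤) (hS_sym : ∀ s ∈ S, s⁻¹ ∈ S) (r : ℕ) :
    ballVolume S r * (∑' x, f x ^ 2 - (r : ℝ) ^ 2 / 2 * dirichletEnergy S f) ≤ 1 := by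
  have hcorr (g : G) := hasSum_mul_comp_mul_right hf.summable_sq g
  have hball := finite_wordDist_le hS_gen hS_sym r
  have hcard : ballVolume S r = hball.toFinset.card := Set.ncard_eq_toFinset_card _ hball
  calc ballVolume S r * (∑' x, f x ^ 2 - (r : ℝ) ^ 2 / 2 * dirichletEnergy S f)
      ≤ ∑ g ∈ hball.toFinset, ∑' x, f x * f (x * g) := by
        rw [hcard, ← nsmul_eq_mul]
        refine Finset.card_nsmul_le_sum _ _ _ fun g hg => ?_
        rw [(hcorr g).tsum_eq]
        obtain ⟨l, hl, hlen, rfl⟩ := exists_list_length_eq_wordDist hS_gen hS_sym 1 g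
        have hlr : l.length ≤ r := hlen.trans_le ((Set.Finite.mem_toFinset hball).mp hg)
        have hpoincare := tsum_sq_comp_mul_list_prod_sub_le hf.summable_sq hl
        have hradius : (l.length : ℝ) ^ 2 * dirichletEnergy S f
            ≤ (r : ℝ) ^ 2 * dirichletEnergy S f := by
          gcongr
          exact dirichletEnergy_nonneg S f
        rw [one_mul]
        linarith
    _ ≤ 1 := hf.sum_tsum_mul_comp_mul_right_le_one _ fun g => (hcorr g).summable

end Density

section Nash

theorem exists_nat_two_div_le_mul_rpow {C D : ℝ} (hC : 0 < C) (hD : 0 < D) :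
    ∃ M : ℝ, 0 < M ∧ ∀ u : ℝ, 0 < u → u ≤ 1 → ∃ r : ℕ, 1 ≤ r ∧
      2 / u ≤ C * (r : ℝ) ^ D ∧ (r : ℝ) ^ 2 ≤ M * u ^ (-(2 / D)) := by
  refine ⟨((2 / C) ^ D⁻¹ + 1) ^ 2, by positivity, fun u hu hu1 => ?_⟩
  have hscale : (1 : ℝ) ≤ u ^ (-D⁻¹) :=
    Real.one_le_rpow_of_pos_of_le_one_of_nonpos hu hu1 (neg_nonpos.mpr (by positivity))
  set ρ : ℝ := (2 / C) ^ D⁻¹ * u ^ (-D⁻¹) with hρ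
  have hρ_pos : 0 < ρ := by positivity
  have hρ_rpow : ρ ^ D = 2 / C * u⁻¹ := by
    rw [hρ, Real.mul_rpow (by positivity) (by positivity),
      Real.rpow_inv_rpow (by positivity) hD.ne', Real.rpow_neg hu.le,
      Real.inv_rpow (by positivity), Real.rpow_inv_rpow hu.le hD.ne']
  refine ⟨⌈ρ⌉₊, Nat.ceil_pos.mpr hρ_pos, ?_, ?_⟩
  · calc 2 / u = C * ρ ^ D := by rw [hρ_rpow]; field_simp
      _ ≤ C * (⌈ρ⌉₊ : ℝ) ^ D := by gcongr; exact Nat.le_ceil ρ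
  · have hceil : (⌈ρ⌉₊ : ℝ) ≤ ((2 / C) ^ D⁻¹ + 1) * u ^ (-D⁻¹) := by
      linarith [Nat.ceil_lt_add_one hρ_pos.le]
    calc (⌈ρ⌉₊ : ℝ) ^ 2 ≤ (((2 / C) ^ D⁻¹ + 1) * u ^ (-D⁻¹)) ^ 2 := by gcongr
      _ = ((2 / C) ^ D⁻¹ + 1) ^ 2 * u ^ (-(2 / D)) := by
        rw [mul_pow, ← Real.rpow_mul_natCast hu.le]
        congr 2
        push_cast
        ring

variable [Group G] {S : Finset G}

theorem exists_nash_inequality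
    (hS_gen : Subgroup.closure (S : Set G) = ⊤) (hS_sym : ∀ s ∈ S, s⁻¹ ∈ S)
    {C D : ℝ} (hC : 0 < C) (hD : 0 < D)
    (hvol : ∀ n : ℕ, 1 ≤ n → C * (n : ℝ) ^ D ≤ ballVolume S n) :
    ∃ c : ℝ, 0 < c ∧ ∀ f : G → ℝ, IsDensity f →
      c * (∑' x, f x ^ 2) ^ (1 + 2 / D) ≤ dirichletEnergy S f := by
  obtain ⟨M, hM, hradius⟩ := exists_nat_two_div_le_mul_rpow hC hD
  refine ⟨M⁻¹, by positivity, fun f hf => ?_⟩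
  have hu := hf.tsum_sq_pos
  have hE := dirichletEnergy_nonneg S f
  have hvolume := hf.ballVolume_mul_le_one hS_gen hS_sym
  obtain ⟨r, hr, hVr, hr_sq⟩ := hradius _ hu hf.tsum_sq_le_one
  generalize ∑' x, f x ^ 2 = u at *
  generalize dirichletEnergy S f = E at *
  have hu_le : u ≤ (r : ℝ) ^ 2 * E := by
    have hhalf : u - (r : ℝ) ^ 2 / 2 * E ≤ u / 2 := by
      by_contra! hlt
      have hV : 2 / u ≤ ballVolume S r := hVr.trans (hvol r hr)
      have := calc 1 = 2 / u * (u / 2) := by field_simp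
        _ < 2 / u * (u - (r : ℝ) ^ 2 / 2 * E) := by gcongr
        _ ≤ ballVolume S r * (u - (r : ℝ) ^ 2 / 2 * E) := by gcongr; linarith
        _ ≤ 1 := hvolume r
      exact this.false
    linarith
  rw [inv_mul_le_iff₀ hM]
  calc u ^ (1 + 2 / D) = u * u ^ (2 / D) := by rw [Real.rpow_add hu, Real.rpow_one]
    _ ≤ M * u ^ (-(2 / D)) * E * u ^ (2 / D) := by
      gcongr
      exact hu_le.trans (by gcongr)
    _ = M * E * (u ^ (-(2 / D)) * u ^ (2 / D)) := by ring
    _ = M * E := by rw [← Real.rpow_add hu, neg_add_cancel, Real.rpow_zero, mul_one]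

theorem le_rpow_of_forall_succ_le {a : ℕ → ℝ} {c θ : ℝ} (hθ : 0 < θ) (hc : 0 ≤ c)
    (hpos : ∀ n, 0 < a n) (hzero : a 0 ≤ 1)
    (hsucc : ∀ n, a (n + 1) ≤ a n - c * a n ^ (1 + θ)) (n : ℕ) :
    a n ≤ (1 + c * θ * n) ^ (-θ⁻¹) := by
  have hgrow (n : ℕ) : a n ^ (-θ) + c * θ ≤ a (n + 1) ^ (-θ) := by
    have han := hpos n
    have hexp : a (n + 1) ≤ a n * Real.exp (-(c * a n ^ θ)) :=
      calc a (n + 1) ≤ a n * (1 - c * a n ^ θ) := by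
            have h := hsucc n
            rw [Real.rpow_add han, Real.rpow_one] at h
            linarith
        _ ≤ a n * Real.exp (-(c * a n ^ θ)) := by gcongr; exact Real.one_sub_le_exp_neg _
    calc a n ^ (-θ) + c * θ = a n ^ (-θ) * (1 + c * a n ^ θ * θ) := by
          have : a n ^ (-θ) * a n ^ θ = 1 := by
            rw [← Real.rpow_add han, neg_add_cancel, Real.rpow_zero]
          linear_combination -(c * θ) * this
      _ ≤ a n ^ (-θ) * Real.exp (c * a n ^ θ * θ) := by
          gcongr
          linarith [Real.add_one_le_exp (c * a n ^ θ * θ)]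
      _ = (a n * Real.exp (-(c * a n ^ θ))) ^ (-θ) := by
          rw [Real.mul_rpow han.le (Real.exp_pos _).le, ← Real.exp_mul, neg_mul_neg]
      _ ≤ a (n + 1) ^ (-θ) := Real.rpow_le_rpow_of_nonpos (hpos _) hexp (by linarith)
  have hlinear : 1 + c * θ * n ≤ a n ^ (-θ) := by
    induction n with
    | zero =>
      simpa only [Nat.cast_zero, mul_zero, add_zero] using
        Real.one_le_rpow_of_pos_of_le_one_of_nonpos (hpos 0) hzero (by linarith)
    | succ n ih =>
      push_cast
      linarith [hgrow n]
  calc a n = (a n ^ (-θ)) ^ (-θ⁻¹) := by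
        rw [← Real.rpow_mul (hpos n).le, neg_mul_neg, mul_inv_cancel₀ hθ.ne', Real.rpow_one]
    _ ≤ (1 + c * θ * n) ^ (-θ⁻¹) :=
        Real.rpow_le_rpow_of_nonpos (by positivity) hlinear (neg_nonpos.mpr (by positivity))

theorem exists_tsum_lazyWalk_pow_sq_le_rpow
    (hS_gen : Subgroup.closure (S : Set G) = ⊤) (hS_sym : ∀ s ∈ S, s⁻¹ ∈ S)
    {C D : ℝ} (hC : 0 < C) (hD : 0 < D)
    (hvol : ∀ n : ℕ, 1 ≤ n → C * (n : ℝ) ^ D ≤ ballVolume S n) :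
    ∃ b : ℝ, 0 < b ∧ ∀ f : G → ℝ, IsDensity f → ∀ n : ℕ,
      ∑' x, (lazyWalk S ^ n) f x ^ 2 ≤ (1 + b * n) ^ (-(D / 2)) := by
  obtain ⟨c, hc, hnash⟩ := exists_nash_inequality hS_gen hS_sym hC hD hvol
  have hκ := stepSize_pos S
  refine ⟨stepSize S / 2 * c * (2 / D), by positivity, fun f hf n => ?_⟩
  rw [← inv_div 2 D]
  refine le_rpow_of_forall_succ_le (a := fun n => ∑' x, (lazyWalk S ^ n) f x ^ 2)
    (by positivity) (by positivity) (fun n => (hf.map_lazyWalk_pow S n).tsum_sq_pos)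
    hf.tsum_sq_le_one (fun n => ?_) n
  have hdecr := tsum_lazyWalk_sq_le (S := S) (hf.map_lazyWalk_pow S n).summable_sq
  rw [← lazyWalk_pow_succ_apply] at hdecr
  have hE := mul_le_mul_of_nonneg_left (hnash _ (hf.map_lazyWalk_pow S n)) (half_pos hκ).le
  rw [← mul_assoc] at hE
  linarith

end Nash

section HeatKernel

theorem isDensity_indicator_singleton (x : G) : IsDensity (Set.indicator {x} 1) where
  nonneg := Set.indicator_nonneg fun _ _ => zero_le_one
  hasSum := by
    have h := hasSum_single (f := Set.indicator {x} (1 : G → ℝ)) x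
      fun y hy => Set.indicator_of_notMem hy 1
    rwa [Set.indicator_of_mem (Set.mem_singleton x), Pi.one_apply] at h

variable [Group G] (S : Finset G)

/-- The heat kernel of the lazy walk: `heatKernel S n x` is the law at time `n` of the walk started
at `x`. -/
def heatKernel (n : ℕ) (x : G) : G → ℝ := (lazyWalk S ^ n) (Set.indicator {x} 1)

theorem isDensity_heatKernel (n : ℕ) (x : G) : IsDensity (heatKernel S n x) :=
  (isDensity_indicator_singleton x).map_lazyWalk_pow S n

theorem heatKernel_succ (n : ℕ) (x : G) :
    heatKernel S (n + 1) x = lazyWalk S (heatKernel S n x) :=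
  lazyWalk_pow_succ_apply S n _

theorem finite_support_lazyWalk {a : G → ℝ} (ha : a.support.Finite) :
    (lazyWalk S a).support.Finite := by
  refine (ha.union (S.finite_toSet.biUnion fun s _ =>
    ha.preimage (mul_left_injective s).injOn)).subset fun x hx => ?_
  by_contra! hzero
  simp only [Set.mem_union, Set.mem_iUnion, Set.mem_preimage, Function.mem_support, not_or,
    not_exists, not_not] at hzero
  refine hx ?_
  rw [lazyWalk_apply_eq_convex_combination, hzero.1, mul_zero, zero_add]
  exact Finset.sum_eq_zero fun s hs => by rw [hzero.2 s hs, mul_zero]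

theorem finite_support_heatKernel (n : ℕ) (x : G) : (heatKernel S n x).support.Finite := by
  induction n with
  | zero =>
    exact (Set.finite_singleton x).subset Set.support_indicator_subset
  | succ n ih =>
    rw [heatKernel_succ]
    exact finite_support_lazyWalk S ih

variable {S}

theorem tsum_lazyWalk_mul (hS_sym : ∀ s ∈ S, s⁻¹ ∈ S) {a : G → ℝ} (ha : a.support.Finite)
    (v : G → ℝ) : ∑' x, lazyWalk S a x * v x = ∑' x, a x * lazyWalk S v x := by
  have hsummable (w : G → ℝ) : Summable fun x => a x * w x :=
    summable_of_hasFiniteSupport (ha.subset (Function.support_mul_subset_left _ _))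
  have hshift (s : G) : HasSum (fun x => a (x * s) * v x) (∑' x, a x * v (x * s⁻¹)) := by
    rw [← (Equiv.mulRight s⁻¹).hasSum_iff]
    simpa only [Function.comp_def, Equiv.coe_mulRight, inv_mul_cancel_right] using
      (hsummable fun x => v (x * s⁻¹)).hasSum
  have hstay := (hsummable v).hasSum.mul_left (1 - stepSize S * S.card)
  have hleft := hstay.add (hasSum_sum fun s (_ : s ∈ S) => (hshift s).mul_left (stepSize S))
  have hright := hstay.add (hasSum_sum fun s (_ : s ∈ S) =>
    (hsummable fun x => v (x * s)).hasSum.mul_left (stepSize S))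
  have hinv : ∑ s ∈ S, stepSize S * ∑' x, a x * v (x * s⁻¹)
      = ∑ s ∈ S, stepSize S * ∑' x, a x * v (x * s) :=
    Finset.sum_nbij' (·⁻¹) (·⁻¹) hS_sym hS_sym (by simp) (by simp) (by simp)
  rw [hinv] at hleft
  refine (hleft.congr_fun fun x => ?_).tsum_eq.trans (hright.congr_fun fun x => ?_).tsum_eq.symm
  · rw [lazyWalk_apply_eq_convex_combination, add_mul, Finset.sum_mul, mul_assoc]
    simp only [mul_assoc]
  · rw [lazyWalk_apply_eq_convex_combination, mul_add, Finset.mul_sum]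
    simp only [mul_left_comm]

theorem lazyWalk_pow_apply_eq_tsum (hS_sym : ∀ s ∈ S, s⁻¹ ∈ S) (n : ℕ) (v : G → ℝ) (x : G) :
    (lazyWalk S ^ n) v x = ∑' y, heatKernel S n x y * v y := by
  induction n generalizing v with
  | zero =>
    rw [tsum_eq_single x fun y hy => ?_]
    · simp [heatKernel]
    · simp [heatKernel, hy]
  | succ n ih =>
    rw [pow_succ, Module.End.mul_apply, ih, heatKernel_succ,
      tsum_lazyWalk_mul hS_sym (finite_support_heatKernel S n x)]

theorem lazyWalk_pow_apply_eq_sum (hS_sym : ∀ s ∈ S, s⁻¹ ∈ S) (n : ℕ) (v : G → ℝ) (x : G) :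
    (lazyWalk S ^ n) v x =
      ∑ y ∈ (finite_support_heatKernel S n x).toFinset, heatKernel S n x y * v y := by
  rw [lazyWalk_pow_apply_eq_tsum hS_sym]
  refine tsum_eq_sum fun y hy => ?_
  rw [Set.Finite.mem_toFinset, Function.notMem_support] at hy
  rw [hy, zero_mul]

theorem sq_lazyWalk_pow_apply_le (hS_sym : ∀ s ∈ S, s⁻¹ ∈ S) {f : G → ℝ}
    (hf : Summable fun x => f x ^ 2) (n : ℕ) (x : G) :
    (lazyWalk S ^ n) f x ^ 2 ≤ (∑' y, heatKernel S n x y ^ 2) * ∑' y, f y ^ 2 := by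
  rw [lazyWalk_pow_apply_eq_sum hS_sym]
  refine (Finset.sum_mul_sq_le_sq_mul_sq _ _ _).trans ?_
  gcongr
  · exact (isDensity_heatKernel S n x).summable_sq.sum_le_tsum _ fun _ _ => sq_nonneg _
  · exact hf.sum_le_tsum _ fun _ _ => sq_nonneg _

theorem abs_lazyWalk_pow_apply_rpow_le (hS_sym : ∀ s ∈ S, s⁻¹ ∈ S) {r : ℝ} (hr : 1 ≤ r)
    {u : G → ℝ} (hu : Memlp r u) (n : ℕ) (x : G) :
    |(lazyWalk S ^ n) u x| ^ r ≤ √(∑' y, heatKernel S n x y ^ 2) * ∑' y, |u y| ^ r := by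
  have hk := isDensity_heatKernel S n x
  set F := (finite_support_heatKernel S n x).toFinset
  have hmass : ∑ y ∈ F, heatKernel S n x y = 1 := by
    rw [← hk.hasSum.tsum_eq]
    exact (tsum_eq_sum fun y hy => by simpa [F] using hy).symm
  have hsup (y : G) : heatKernel S n x y ≤ √(∑' y, heatKernel S n x y ^ 2) :=
    Real.le_sqrt_of_sq_le (hk.summable_sq.le_tsum y fun _ _ => sq_nonneg _)
  calc |(lazyWalk S ^ n) u x| ^ r
      ≤ (∑ y ∈ F, heatKernel S n x y * |u y|) ^ r := by
        rw [lazyWalk_pow_apply_eq_sum hS_sym]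
        gcongr
        refine (Finset.abs_sum_le_sum_abs _ _).trans_eq (Finset.sum_congr rfl fun y _ => ?_)
        rw [abs_mul, abs_of_nonneg (hk.nonneg y)]
    _ ≤ ∑ y ∈ F, heatKernel S n x y * |u y| ^ r :=
        Real.rpow_arith_mean_le_arith_mean_rpow F _ _ (fun y _ => hk.nonneg y) hmass
          (fun y _ => abs_nonneg _) hr
    _ ≤ ∑ y ∈ F, √(∑' y, heatKernel S n x y ^ 2) * |u y| ^ r := by
        gcongr with y
        exact hsup y
    _ ≤ √(∑' y, heatKernel S n x y ^ 2) * ∑' y, |u y| ^ r := by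
        rw [← Finset.mul_sum]
        gcongr
        exact hu.sum_le_tsum F fun y _ => by positivity

theorem tendsto_lazyWalk_pow_apply_zero (hS_sym : ∀ s ∈ S, s⁻¹ ∈ S) {r : ℝ} (hr : 1 ≤ r)
    {u : G → ℝ} (hu : Memlp r u) {x : G}
    (hdecay : Tendsto (fun n => ∑' y, heatKernel S n x y ^ 2) atTop (𝓝 0)) :
    Tendsto (fun n => (lazyWalk S ^ n) u x) atTop (𝓝 0) := by
  have hbound : Tendsto (fun n => √(∑' y, heatKernel S n x y ^ 2) * ∑' y, |u y| ^ r)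
      atTop (𝓝 0) := by
    simpa only [Real.sqrt_zero, zero_mul] using hdecay.sqrt.mul_const (∑' y, |u y| ^ r)
  have hpow : Tendsto (fun n => |(lazyWalk S ^ n) u x| ^ r) atTop (𝓝 0) :=
    squeeze_zero (fun n => by positivity) (abs_lazyWalk_pow_apply_rpow_le hS_sym hr hu · x) hbound
  have hr0 : 0 < r⁻¹ := by positivity
  have hroot := hpow.rpow_const (p := r⁻¹) (Or.inr hr0.le)
  rw [Real.zero_rpow hr0.ne'] at hroot
  refine (tendsto_zero_iff_abs_tendsto_zero _).mpr ?_
  exact hroot.congr fun n => Real.rpow_rpow_inv (abs_nonneg _) (by positivity)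

end HeatKernel

section Sobolev

theorem sum_abs_rpow_le_of_abs_le {ι : Type*} {F : Finset ι} {g : ι → ℝ} {q M : ℝ} (hq : 2 ≤ q)
    (hM : ∀ x ∈ F, |g x| ≤ M) : ∑ x ∈ F, |g x| ^ q ≤ M ^ (q - 2) * ∑ x ∈ F, g x ^ 2 := by
  rw [Finset.mul_sum]
  refine Finset.sum_le_sum fun x hx => ?_
  calc |g x| ^ q = |g x| ^ (q - 2) * |g x| ^ (2 : ℝ) := by
        rw [← Real.rpow_add_of_nonneg (abs_nonneg _) (by linarith) (by norm_num), sub_add_cancel]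
    _ ≤ M ^ (q - 2) * g x ^ 2 := by
        rw [Real.rpow_two, sq_abs]
        gcongr
        exact hM x hx

theorem sum_abs_sum_range_rpow_le {ι : Type*} (F : Finset ι) {q : ℝ} (hq : 1 ≤ q)
    (h : ℕ → ι → ℝ) (n : ℕ) :
    (∑ x ∈ F, |∑ k ∈ Finset.range n, h k x| ^ q) ^ (1 / q) ≤
      ∑ k ∈ Finset.range n, (∑ x ∈ F, |h k x| ^ q) ^ (1 / q) := by
  induction n with
  | zero =>
    have hq0 : q ≠ 0 := by positivity
    simp [Real.zero_rpow hq0, Real.zero_rpow (inv_ne_zero hq0)]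
  | succ n ih =>
    simp only [Finset.sum_range_succ]
    exact (Real.Lp_add_le F _ _ hq).trans (by gcongr)

theorem summable_one_add_mul_natCast_rpow_neg {b γ : ℝ} (hb : 0 < b) (hγ : 1 < γ) :
    Summable fun n : ℕ => (1 + b * n) ^ (-γ) := by
  have hmin : 0 < min 1 b := lt_min one_pos hb
  refine .of_nonneg_of_le (fun n => by positivity) (fun n => ?_)
    (((summable_nat_add_iff 1).mpr (Real.summable_nat_rpow.mpr (neg_lt_neg hγ))).mul_left
      (min 1 b ^ (-γ)))
  rw [← Real.mul_rpow hmin.le (by positivity)]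
  refine Real.rpow_le_rpow_of_nonpos (by positivity) ?_ (by linarith)
  push_cast
  nlinarith only [min_le_left 1 b, min_le_right 1 b, Nat.cast_nonneg (α := ℝ) n]

theorem tendsto_one_add_mul_natCast_rpow_neg {b γ : ℝ} (hb : 0 < b) (hγ : 0 < γ) :
    Tendsto (fun n : ℕ => (1 + b * n) ^ (-γ)) atTop (𝓝 0) :=
  (tendsto_rpow_neg_atTop hγ).comp
    (tendsto_atTop_add_const_left _ _ (tendsto_natCast_atTop_atTop.const_mul_atTop hb))

variable [Group G] {S : Finset G}

theorem sum_range_lazyWalk_pow_lap (u : G → ℝ) (n : ℕ) :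
    ∑ k ∈ Finset.range n, (lazyWalk S ^ k) (-stepSize S • lap S u) = u - (lazyWalk S ^ n) u := by
  have hdiff : (1 - lazyWalk S) u = -stepSize S • lap S u := by
    ext x
    simp [lazyWalk_apply]
  have hgeom := congrArg (fun T : Module.End ℝ (G → ℝ) => T u) (geom_sum_mul_neg (lazyWalk S) n)
  simpa only [Module.End.mul_apply, LinearMap.sum_apply, hdiff, LinearMap.sub_apply,
    Module.End.one_apply] using hgeom

theorem sum_abs_lazyWalk_pow_rpow_le (hS_sym : ∀ s ∈ S, s⁻¹ ∈ S) {b D q : ℝ} (hb : 0 ≤ b)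
    (hdecay : ∀ (n : ℕ) (x : G), ∑' y, heatKernel S n x y ^ 2 ≤ (1 + b * n) ^ (-(D / 2)))
    (hq : 2 ≤ q) {f : G → ℝ} (hf : Summable fun x => f x ^ 2) (F : Finset G) (k : ℕ) :
    (∑ x ∈ F, |(lazyWalk S ^ k) f x| ^ q) ^ (1 / q) ≤
      (1 + b * k) ^ (-(D * (q - 2) / (4 * q))) * √(∑' x, f x ^ 2) := by
  set t : ℝ := 1 + b * k
  have ht : 0 < t := by positivity
  set L := √(∑' x, f x ^ 2)
  have hL_sq : L ^ 2 = ∑' x, f x ^ 2 := Real.sq_sqrt (tsum_nonneg fun _ => sq_nonneg _)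
  have hL : 0 ≤ L := Real.sqrt_nonneg _
  have hq0 : 0 < q := by linarith
  have hsup (x : G) : |(lazyWalk S ^ k) f x| ≤ t ^ (-(D / 4)) * L := by
    refine abs_le_of_sq_le_sq ?_ (by positivity)
    calc (lazyWalk S ^ k) f x ^ 2 ≤ t ^ (-(D / 2)) * L ^ 2 := by
          rw [hL_sq]
          refine (sq_lazyWalk_pow_apply_le hS_sym hf k x).trans ?_
          exact mul_le_mul_of_nonneg_right (hdecay k x) (tsum_nonneg fun _ => sq_nonneg _)
      _ = (t ^ (-(D / 4)) * L) ^ 2 := by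
          rw [mul_pow, ← Real.rpow_mul_natCast ht.le]
          congr 2
          push_cast
          ring
  rw [one_div, Real.rpow_inv_le_iff_of_pos (Finset.sum_nonneg fun _ _ => by positivity)
    (by positivity) hq0]
  calc ∑ x ∈ F, |(lazyWalk S ^ k) f x| ^ q
      ≤ (t ^ (-(D / 4)) * L) ^ (q - 2) * ∑ x ∈ F, (lazyWalk S ^ k) f x ^ 2 :=
        sum_abs_rpow_le_of_abs_le hq fun x _ => hsup x
    _ ≤ (t ^ (-(D / 4)) * L) ^ (q - 2) * L ^ (2 : ℝ) := by
        rw [Real.rpow_two, hL_sq]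
        gcongr
        exact ((summable_lazyWalk_pow_sq hf k).sum_le_tsum F fun _ _ => sq_nonneg _).trans
          (tsum_lazyWalk_pow_sq_le hf k)
    _ = (t ^ (-(D * (q - 2) / (4 * q))) * L) ^ q := by
        rw [Real.mul_rpow (by positivity) hL, Real.mul_rpow (by positivity) hL, mul_assoc,
          ← Real.rpow_add_of_nonneg hL (by linarith) (by norm_num), sub_add_cancel,
          ← Real.rpow_mul ht.le, ← Real.rpow_mul ht.le]
        congr 2
        field_simp

theorem sum_abs_sum_range_lazyWalk_pow_rpow_le (hS_sym : ∀ s ∈ S, s⁻¹ ∈ S) {b D q : ℝ}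
    (hb : 0 ≤ b)
    (hdecay : ∀ (n : ℕ) (x : G), ∑' y, heatKernel S n x y ^ 2 ≤ (1 + b * n) ^ (-(D / 2)))
    (hq : 2 ≤ q) (hsummable : Summable fun n : ℕ => (1 + b * n) ^ (-(D * (q - 2) / (4 * q))))
    {f : G → ℝ} (hf : Summable fun x => f x ^ 2) (F : Finset G) (n : ℕ) :
    ∑ x ∈ F, |∑ k ∈ Finset.range n, (lazyWalk S ^ k) f x| ^ q ≤
      ((∑' n : ℕ, (1 + b * n) ^ (-(D * (q - 2) / (4 * q)))) * √(∑' x, f x ^ 2)) ^ q := by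
  rw [← Real.rpow_inv_le_iff_of_pos (Finset.sum_nonneg fun _ _ => by positivity)
    (by positivity) (by linarith), ← one_div]
  calc (∑ x ∈ F, |∑ k ∈ Finset.range n, (lazyWalk S ^ k) f x| ^ q) ^ (1 / q)
      ≤ ∑ k ∈ Finset.range n, (∑ x ∈ F, |(lazyWalk S ^ k) f x| ^ q) ^ (1 / q) :=
        sum_abs_sum_range_rpow_le F (by linarith) _ n
    _ ≤ ∑ k ∈ Finset.range n, (1 + b * k) ^ (-(D * (q - 2) / (4 * q))) * √(∑' x, f x ^ 2) :=
        Finset.sum_le_sum fun k _ => sum_abs_lazyWalk_pow_rpow_le hS_sym hb hdecay hq hf F k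
    _ ≤ (∑' n : ℕ, (1 + b * n) ^ (-(D * (q - 2) / (4 * q)))) * √(∑' x, f x ^ 2) := by
        rw [← Finset.sum_mul]
        gcongr
        exact hsummable.sum_le_tsum _ fun n _ => by positivity

theorem exists_tsum_heatKernel_sq_le_rpow
    (hS_gen : Subgroup.closure (S : Set G) = ⊤) (hS_sym : ∀ s ∈ S, s⁻¹ ∈ S)
    {C D : ℝ} (hC : 0 < C) (hD : 0 < D)
    (hvol : ∀ n : ℕ, 1 ≤ n → C * (n : ℝ) ^ D ≤ ballVolume S n) :
    ∃ b : ℝ, 0 < b ∧ ∀ (n : ℕ) (x : G),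
      ∑' y, heatKernel S n x y ^ 2 ≤ (1 + b * n) ^ (-(D / 2)) := by
  obtain ⟨b, hb, hdecay⟩ := exists_tsum_lazyWalk_pow_sq_le_rpow hS_gen hS_sym hC hD hvol
  exact ⟨b, hb, fun n x => hdecay _ (isDensity_indicator_singleton x) n⟩

theorem tendsto_sum_range_lazyWalk_pow_lap (hS_sym : ∀ s ∈ S, s⁻¹ ∈ S) {b D : ℝ}
    (hb : 0 < b) (hD : 0 < D)
    (hdecay : ∀ (n : ℕ) (x : G), ∑' y, heatKernel S n x y ^ 2 ≤ (1 + b * n) ^ (-(D / 2)))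
    {r : ℝ} (hr : 1 ≤ r) {u : G → ℝ} (hu : Memlp r u) (x : G) :
    Tendsto (fun n => ∑ k ∈ Finset.range n, (lazyWalk S ^ k) (-stepSize S • lap S u) x)
      atTop (𝓝 (u x)) := by
  have hkernel : Tendsto (fun n => ∑' y, heatKernel S n x y ^ 2) atTop (𝓝 0) :=
    squeeze_zero (fun n => tsum_nonneg fun _ => sq_nonneg _) (hdecay · x)
      (tendsto_one_add_mul_natCast_rpow_neg hb (half_pos hD))
  have hlim := (tendsto_lazyWalk_pow_apply_zero hS_sym hr hu hkernel).const_sub (u x)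
  rw [sub_zero] at hlim
  refine hlim.congr fun n => ?_
  rw [← Finset.sum_apply, sum_range_lazyWalk_pow_lap, Pi.sub_apply]

theorem exists_sobolev_inequality
    (hS_gen : Subgroup.closure (S : Set G) = ⊤) (hS_sym : ∀ s ∈ S, s⁻¹ ∈ S)
    {C D : ℝ} (hC : 0 < C) (hD : 4 < D)
    (hvol : ∀ n : ℕ, 1 ≤ n → C * (n : ℝ) ^ D ≤ ballVolume S n)
    {q : ℝ} (hq : 2 * D / (D - 4) < q) :
    ∃ A : ℝ, 0 < A ∧ ∀ r : ℝ, 1 ≤ r → ∀ u : G → ℝ, Memlp r u → (Summable fun x => lap S u x ^ 2) →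
      Memlp q u ∧ ∑' x, |u x| ^ q ≤ (A * √(∑' x, lap S u x ^ 2)) ^ q := by
  have hq_mul : 2 * D < q * (D - 4) := (div_lt_iff₀ (by linarith)).mp hq
  have hq2 : 2 < q := by nlinarith only [hq_mul, hD]
  obtain ⟨b, hb, hdecay⟩ := exists_tsum_heatKernel_sq_le_rpow hS_gen hS_sym hC (by linarith) hvol
  have hγ : 1 < D * (q - 2) / (4 * q) := by
    rw [lt_div_iff₀ (by positivity)]
    linarith
  have hsummable := summable_one_add_mul_natCast_rpow_neg hb hγ
  have hT := hsummable.tsum_pos (fun n => by positivity) 0 (by positivity)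
  have hκ := stepSize_pos S
  refine ⟨_, mul_pos hT hκ, fun r hr u hu hlap => ?_⟩
  have hf_sq (x : G) : (-stepSize S • lap S u) x ^ 2 = stepSize S ^ 2 * lap S u x ^ 2 := by
    rw [Pi.smul_apply, smul_eq_mul, mul_pow, neg_sq]
  have hf : Summable fun x => (-stepSize S • lap S u) x ^ 2 := by
    simpa only [hf_sq] using hlap.mul_left (stepSize S ^ 2)
  have hf_norm : √(∑' x, (-stepSize S • lap S u) x ^ 2)
      = stepSize S * √(∑' x, lap S u x ^ 2) := by
    simp only [hf_sq, tsum_mul_left, Real.sqrt_mul (sq_nonneg _), Real.sqrt_sq hκ.le]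
  have hfinite (F : Finset G) := le_of_tendsto'
    (tendsto_finsetSum F fun x _ => ((tendsto_sum_range_lazyWalk_pow_lap hS_sym hb (by linarith)
      hdecay hr hu x).abs).rpow_const (p := q) (Or.inr (by linarith)))
    (sum_abs_sum_range_lazyWalk_pow_rpow_le hS_sym hb.le hdecay hq2.le hsummable hf F)
  simp only [hf_norm, ← mul_assoc] at hfinite
  have hmem : Memlp q u := summable_of_sum_le (fun _ => by positivity) hfinite
  exact ⟨hmem, hmem.tsum_le_of_sum_le hfinite⟩

end Sobolev

section Young

open scoped ENNReal

theorem tsum_prod_rpow_le {ι κ : Type*} (F : Finset κ) (f : κ → ι → ℝ≥0∞) {w : κ → ℝ}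
    (hw : ∑ k ∈ F, w k = 1) (hw_nonneg : ∀ k ∈ F, 0 ≤ w k) :
    ∑' i, ∏ k ∈ F, f k i ^ w k ≤ ∏ k ∈ F, (∑' i, f k i) ^ w k := by
  let _ : MeasurableSpace ι := ⊤
  simpa only [MeasureTheory.lintegral_count] using
    ENNReal.lintegral_prod_norm_pow_le (μ := MeasureTheory.Measure.count) F
      (fun k _ => (measurable_from_top (f := f k)).aemeasurable) hw hw_nonneg

theorem rpow_mul_rpow_mul_rpow_eq_of_add_eq_two {a b c : ℝ} (ha : a ≤ 1) (hb : b ≤ 1)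
    (hc : c ≤ 1) (habc : a + b + c = 2) (x y z : ℝ≥0∞) :
    x ^ a * y ^ b * z ^ c = (x * y) ^ (1 - c) * (x * z) ^ (1 - b) * (y * z) ^ (1 - a) := by
  have ha' := sub_nonneg.mpr ha
  have hb' := sub_nonneg.mpr hb
  have hc' := sub_nonneg.mpr hc
  have hx : x ^ a = x ^ (1 - c) * x ^ (1 - b) := by
    rw [← ENNReal.rpow_add_of_nonneg _ _ hc' hb']; congr 1; linarith
  have hy : y ^ b = y ^ (1 - c) * y ^ (1 - a) := by
    rw [← ENNReal.rpow_add_of_nonneg _ _ hc' ha']; congr 1; linarith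
  have hz : z ^ c = z ^ (1 - b) * z ^ (1 - a) := by
    rw [← ENNReal.rpow_add_of_nonneg _ _ hb' ha']; congr 1; linarith
  rw [hx, hy, hz, ENNReal.mul_rpow_of_nonneg _ _ hc', ENNReal.mul_rpow_of_nonneg _ _ hb',
    ENNReal.mul_rpow_of_nonneg _ _ ha']
  ring

variable [Group G]

/-- The three pairwise products of `f x ^ a`, `g y ^ b` and `k (x⁻¹ * y) ^ s` sum over `G × G` to
products of norms, so Young's inequality is Hölder's inequality for these. -/
theorem tsum_mul_mul_comp_inv_mul_le {a b s : ℝ} (ha : 1 ≤ a) (hb : 1 ≤ b) (hs : 1 ≤ s)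
    (habs : a⁻¹ + b⁻¹ + s⁻¹ = 2) (f g k : G → ℝ≥0∞) :
    ∑' x, ∑' y, f x * k (x⁻¹ * y) * g y ≤
      (∑' x, f x ^ a) ^ a⁻¹ * (∑' x, k x ^ s) ^ s⁻¹ * (∑' x, g x ^ b) ^ b⁻¹ := by
  have ha1 : a⁻¹ ≤ 1 := inv_le_one_of_one_le₀ ha
  have hb1 : b⁻¹ ≤ 1 := inv_le_one_of_one_le₀ hb
  have hs1 : s⁻¹ ≤ 1 := inv_le_one_of_one_le₀ hs
  have hinv_mul (x : G) : ∑' y, k (x⁻¹ * y) ^ s = ∑' y, k y ^ s :=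
    (Equiv.mulLeft x⁻¹).tsum_eq fun y => k y ^ s
  have hmul_inv (y : G) : ∑' x, k (x⁻¹ * y) ^ s = ∑' x, k x ^ s :=
    ((Equiv.inv G).trans (Equiv.mulRight y)).tsum_eq fun x => k x ^ s
  let T : Fin 3 → G × G → ℝ≥0∞ := ![fun z => f z.1 ^ a * k (z.1⁻¹ * z.2) ^ s,
    fun z => f z.1 ^ a * g z.2 ^ b, fun z => k (z.1⁻¹ * z.2) ^ s * g z.2 ^ b]
  let w : Fin 3 → ℝ := ![1 - b⁻¹, 1 - s⁻¹, 1 - a⁻¹]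
  have hsplit (z : G × G) : f z.1 * k (z.1⁻¹ * z.2) * g z.2 = ∏ i, T i z ^ w i := by
    simp only [Fin.prod_univ_three, T, w, Matrix.cons_val]
    rw [← rpow_mul_rpow_mul_rpow_eq_of_add_eq_two ha1 hs1 hb1 (by linarith),
      ENNReal.rpow_rpow_inv (by positivity), ENNReal.rpow_rpow_inv (by positivity),
      ENNReal.rpow_rpow_inv (by positivity)]
  have hfk : ∑' z, T 0 z = (∑' x, f x ^ a) * ∑' x, k x ^ s := by
    simp only [T, Matrix.cons_val, ENNReal.tsum_prod', ENNReal.tsum_mul_left, hinv_mul,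
      ENNReal.tsum_mul_right]
  have hfg : ∑' z, T 1 z = (∑' x, f x ^ a) * ∑' x, g x ^ b := by
    simp only [T, Matrix.cons_val, ENNReal.tsum_prod', ENNReal.tsum_mul_left,
      ENNReal.tsum_mul_right]
  have hkg : ∑' z, T 2 z = (∑' x, k x ^ s) * ∑' x, g x ^ b := by
    simp only [T, Matrix.cons_val, ENNReal.tsum_prod']
    rw [ENNReal.tsum_comm]
    simp only [ENNReal.tsum_mul_right, hmul_inv, ENNReal.tsum_mul_left]
  calc ∑' x, ∑' y, f x * k (x⁻¹ * y) * g y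
      = ∑' z, ∏ i, T i z ^ w i := by simp only [← hsplit, ENNReal.tsum_prod']
    _ ≤ ∏ i, (∑' z, T i z) ^ w i := by
        refine tsum_prod_rpow_le Finset.univ T ?_ fun i _ => ?_
        · simp only [Fin.sum_univ_three, w, Matrix.cons_val]
          linarith
        · fin_cases i <;> simpa [w]
    _ = _ := by
        simp only [Fin.prod_univ_three, hfk, hfg, hkg, w, Matrix.cons_val]
        exact (rpow_mul_rpow_mul_rpow_eq_of_add_eq_two ha1 hs1 hb1 (by linarith) _ _ _).symm

end Young

section RieszKernel

theorem tsum_ofReal_rpow_rpow_inv {ι : Type*} {f : ι → ℝ} {t : ℝ} (hf : ∀ i, 0 ≤ f i)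
    (ht : 0 ≤ t) (hft : Summable fun i => f i ^ t) :
    (∑' i, ENNReal.ofReal (f i) ^ t) ^ t⁻¹ = ENNReal.ofReal ((∑' i, f i ^ t) ^ t⁻¹) := by
  have hnonneg (i : ι) : 0 ≤ f i ^ t := Real.rpow_nonneg (hf i) t
  rw [← ENNReal.ofReal_rpow_of_nonneg (tsum_nonneg hnonneg) (inv_nonneg.mpr ht),
    ENNReal.ofReal_tsum_of_nonneg hnonneg hft]
  simp only [ENNReal.ofReal_rpow_of_nonneg (hf _) ht]

theorem tsum_tsum_le_of_tsum_tsum_ofReal_le {ι κ : Type*} {F : ι → κ → ℝ} {B : ℝ}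
    (hF : ∀ i j, 0 ≤ F i j) (hB : 0 ≤ B)
    (h : ∑' i, ∑' j, ENNReal.ofReal (F i j) ≤ ENNReal.ofReal B) : ∑' i, ∑' j, F i j ≤ B := by
  have htop := ENNReal.ne_top_of_tsum_ne_top (ne_top_of_le_ne_top ENNReal.ofReal_ne_top h)
  calc ∑' i, ∑' j, F i j
      = ∑' i, (∑' j, ENNReal.ofReal (F i j)).toReal := tsum_congr fun i => by
        simp only [ENNReal.tsum_toReal_eq fun _ => ENNReal.ofReal_ne_top,
          ENNReal.toReal_ofReal (hF i _)]
    _ = (∑' i, ∑' j, ENNReal.ofReal (F i j)).toReal := (ENNReal.tsum_toReal_eq htop).symm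
    _ ≤ B := ENNReal.toReal_le_of_le_ofReal hB h

variable [Group G]

theorem tsum_conv_mul_le {a b s : ℝ} (ha : 1 ≤ a) (hb : 1 ≤ b) (hs : 1 ≤ s)
    (habs : a⁻¹ + b⁻¹ + s⁻¹ = 2) {R : G → G → ℝ} {K f g : G → ℝ} (hR : ∀ x y, 0 ≤ R x y)
    (hRK : ∀ x y, R x y ≤ K (x⁻¹ * y)) (hf : ∀ x, 0 ≤ f x) (hg : ∀ x, 0 ≤ g x)
    (hfa : Summable fun x => f x ^ a) (hgb : Summable fun x => g x ^ b)
    (hKs : Summable fun x => K x ^ s) :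
    ∑' x, conv R f x * g x ≤
      (∑' x, g x ^ b) ^ b⁻¹ * (∑' x, K x ^ s) ^ s⁻¹ * (∑' x, f x ^ a) ^ a⁻¹ := by
  have hK (z : G) : 0 ≤ K z := by simpa only [inv_one, one_mul] using (hR 1 z).trans (hRK 1 z)
  have hg_nonneg : 0 ≤ ∑' x, g x ^ b := tsum_nonneg fun x => Real.rpow_nonneg (hg x) b
  have hK_nonneg : 0 ≤ ∑' x, K x ^ s := tsum_nonneg fun x => Real.rpow_nonneg (hK x) s
  have hf_nonneg : 0 ≤ ∑' x, f x ^ a := tsum_nonneg fun x => Real.rpow_nonneg (hf x) a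
  simp only [conv, ← tsum_mul_right]
  refine tsum_tsum_le_of_tsum_tsum_ofReal_le
    (fun x y => mul_nonneg (mul_nonneg (hR x y) (hf y)) (hg x)) (by positivity) ?_
  rw [ENNReal.ofReal_mul (by positivity), ENNReal.ofReal_mul (by positivity),
    ← tsum_ofReal_rpow_rpow_inv hg (by positivity) hgb,
    ← tsum_ofReal_rpow_rpow_inv hK (by positivity) hKs,
    ← tsum_ofReal_rpow_rpow_inv hf (by positivity) hfa]
  refine le_trans ?_ (tsum_mul_mul_comp_inv_mul_le hb ha hs (by linarith) _ _ _)
  gcongr with x y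
  rw [← ENNReal.ofReal_mul (hg x), ← ENNReal.ofReal_mul (mul_nonneg (hg x) (hK _))]
  refine ENNReal.ofReal_le_ofReal ?_
  calc R x y * f y * g x = g x * R x y * f y := by ring
    _ ≤ g x * K (x⁻¹ * y) * f y :=
      mul_le_mul_of_nonneg_right (mul_le_mul_of_nonneg_left (hRK x y) (hg x)) (hf y)

theorem two_pow_log_le_max_one (n : ℕ) : 2 ^ Nat.log 2 n ≤ max 1 n := by
  rcases eq_or_ne n 0 with rfl | hn
  · rw [Nat.log_zero_right, pow_zero, max_eq_left zero_le_one]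
  · exact (Nat.pow_log_le_self 2 hn).trans (le_max_right 1 n)

variable {S : Finset G}

theorem summable_max_one_wordDist_rpow (hS_gen : Subgroup.closure (S : Set G) = ⊤)
    (hS_sym : ∀ s ∈ S, s⁻¹ ∈ S) {C D β : ℝ} (hD : 0 ≤ D)
    (hvol : ∀ n : ℕ, 1 ≤ n → (ballVolume S n : ℝ) ≤ C * (n : ℝ) ^ D) (hβ : D < β) :
    Summable fun g : G => max 1 (wordDist S 1 g : ℝ) ^ (-β) := by
  let shell (k : ℕ) : Set G := {g | Nat.log 2 (wordDist S 1 g) = k}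
  have hle {k : ℕ} (g : shell k) : max 1 (wordDist S 1 g : ℝ) ^ (-β) ≤ ((2 : ℝ) ^ k) ^ (-β) := by
    refine Real.rpow_le_rpow_of_nonpos (by positivity) ?_ (by linarith)
    obtain ⟨g, rfl⟩ := g
    exact mod_cast two_pow_log_le_max_one (wordDist S 1 g)
  have hball (k : ℕ) : shell k ⊆ {g | wordDist S 1 g ≤ 2 ^ (k + 1)} := fun g hg =>
    hg ▸ (Nat.lt_pow_succ_log_self one_lt_two _).le
  have hfin (k : ℕ) : (shell k).Finite := (finite_wordDist_le hS_gen hS_sym _).subset (hball k)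
  have hcard (k : ℕ) : ((shell k).ncard : ℝ) ≤ C * ((2 : ℝ) ^ (k + 1)) ^ D :=
    calc ((shell k).ncard : ℝ) ≤ ballVolume S (2 ^ (k + 1)) :=
          mod_cast Set.ncard_le_ncard (hball k) (finite_wordDist_le hS_gen hS_sym _)
      _ ≤ C * ((2 : ℝ) ^ (k + 1)) ^ D := mod_cast hvol _ Nat.one_le_two_pow
  have hshell (k : ℕ) : ∑' g : shell k, max 1 (wordDist S 1 (g : G) : ℝ) ^ (-β) ≤
      C * 2 ^ D * ((2 : ℝ) ^ (D - β)) ^ k := by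
    have := (hfin k).fintype
    calc ∑' g : shell k, max 1 (wordDist S 1 (g : G) : ℝ) ^ (-β)
        ≤ (shell k).ncard * ((2 : ℝ) ^ k) ^ (-β) := by
          rw [tsum_fintype, ← Nat.card_coe_set_eq, Nat.card_eq_fintype_card, ← nsmul_eq_mul]
          exact Finset.sum_le_card_nsmul _ _ _ fun g _ => hle g
      _ ≤ C * ((2 : ℝ) ^ (k + 1)) ^ D * ((2 : ℝ) ^ k) ^ (-β) := by gcongr; exact hcard k
      _ = C * 2 ^ D * ((2 : ℝ) ^ (D - β)) ^ k := by
          rw [pow_succ, Real.mul_rpow (by positivity) zero_le_two, ← Real.rpow_pow_comm zero_le_two,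
            ← Real.rpow_pow_comm zero_le_two, Real.rpow_sub two_pos, Real.rpow_neg zero_le_two]
          ring
  have hpartition (g : G) : ∃! k, g ∈ shell k := ⟨_, rfl, fun _ h => h.symm⟩
  refine (summable_partition (fun g => by positivity) hpartition).mpr ⟨fun k => ?_, ?_⟩
  · have := (hfin k).to_subtype
    exact .of_finite
  · exact .of_nonneg_of_le (fun k => tsum_nonneg fun g => by positivity) hshell
      ((summable_geometric_of_lt_one (by positivity)
        (Real.rpow_lt_one_of_one_lt_of_neg one_lt_two (sub_neg.mpr hβ))).mul_left _)

end RieszKernel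

section Energy

variable [Group G] {S : Finset G}

theorem le_mul_max_one_wordDist_rpow (hS_gen : Subgroup.closure (S : Set G) = ⊤)
    (hS_sym : ∀ s ∈ S, s⁻¹ ∈ S) {R : G → G → ℝ} {c γ : ℝ}
    (hR_up : ∀ x y, x ≠ y → R x y ≤ c * (wordDist S x y : ℝ) ^ γ) (hR_diag : ∀ x, R x x ≤ c)
    (x y : G) : R x y ≤ c * max 1 (wordDist S 1 (x⁻¹ * y) : ℝ) ^ γ := by
  rw [← wordDist_eq_wordDist_one]
  rcases eq_or_ne x y with rfl | hxy
  · simpa only [wordDist_self, Nat.cast_zero, max_eq_left zero_le_one, Real.one_rpow, mul_one]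
      using hR_diag x
  · rw [max_eq_right (mod_cast one_le_wordDist hS_gen hS_sym hxy)]
    exact hR_up x y hxy

theorem exists_hardy_littlewood_sobolev_inequality (hS_gen : Subgroup.closure (S : Set G) = ⊤)
    (hS_sym : ∀ s ∈ S, s⁻¹ ∈ S) {C D α : ℝ} (hD : 0 < D)
    (hvol : ∀ n : ℕ, 1 ≤ n → (ballVolume S n : ℝ) ≤ C * (n : ℝ) ^ D) (hα : 0 ≤ α)
    {R : G → G → ℝ} (hR : ∀ x y, 0 ≤ R x y) {c : ℝ}
    (hR_up : ∀ x y, x ≠ y → R x y ≤ c * (wordDist S x y : ℝ) ^ (α - D))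
    (hR_diag : ∀ x, R x x ≤ c) {a b : ℝ} (ha : 1 < a) (hb : 1 ≤ b) (hab : 1 + α / D < a⁻¹ + b⁻¹) :
    ∃ B : ℝ, 0 < B ∧ ∀ f g : G → ℝ, (∀ x, 0 ≤ f x) → (∀ x, 0 ≤ g x) →
      (Summable fun x => f x ^ a) → (Summable fun x => g x ^ b) →
      ∑' x, conv R f x * g x ≤ B * ((∑' x, f x ^ a) ^ a⁻¹ * (∑' x, g x ^ b) ^ b⁻¹) := by
  have hc : 0 ≤ c := (hR 1 1).trans (hR_diag 1)
  have ha1 : a⁻¹ < 1 := inv_lt_one_of_one_lt₀ ha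
  have hb1 : b⁻¹ ≤ 1 := inv_le_one_of_one_le₀ hb
  have hαD : 0 ≤ α / D := div_nonneg hα hD.le
  set t := 2 - a⁻¹ - b⁻¹
  have ht0 : 0 < t := by linarith
  have ht1 : 1 ≤ t⁻¹ := (one_le_inv₀ ht0).mpr (by linarith)
  have hDt : D < (D - α) * t⁻¹ := by
    rw [← div_eq_mul_inv, lt_div_iff₀ ht0, ← lt_div_iff₀' hD, sub_div, div_self hD.ne']
    linarith
  let K (g : G) : ℝ := c * max 1 (wordDist S 1 g : ℝ) ^ (α - D)
  have hK : Summable fun g => K g ^ t⁻¹ := by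
    refine ((summable_max_one_wordDist_rpow hS_gen hS_sym hD.le hvol hDt).mul_left
      (c ^ t⁻¹)).congr fun g => ?_
    rw [Real.mul_rpow hc (by positivity), ← Real.rpow_mul (by positivity), ← neg_mul, neg_sub]
  have : 0 ≤ ∑' g, K g ^ t⁻¹ := tsum_nonneg fun g => by positivity
  refine ⟨(∑' g, K g ^ t⁻¹) ^ t⁻¹⁻¹ + 1, by positivity, fun f g hf hg hfa hgb => ?_⟩
  have hf_nonneg : 0 ≤ ∑' x, f x ^ a := tsum_nonneg fun x => Real.rpow_nonneg (hf x) a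
  have hg_nonneg : 0 ≤ ∑' x, g x ^ b := tsum_nonneg fun x => Real.rpow_nonneg (hg x) b
  calc ∑' x, conv R f x * g x
      ≤ (∑' x, g x ^ b) ^ b⁻¹ * (∑' g, K g ^ t⁻¹) ^ t⁻¹⁻¹ * (∑' x, f x ^ a) ^ a⁻¹ :=
        tsum_conv_mul_le ha.le hb ht1 (by rw [inv_inv]; linarith) hR
          (le_mul_max_one_wordDist_rpow hS_gen hS_sym hR_up hR_diag) hf hg hfa hgb hK
    _ = (∑' g, K g ^ t⁻¹) ^ t⁻¹⁻¹ * ((∑' x, f x ^ a) ^ a⁻¹ * (∑' x, g x ^ b) ^ b⁻¹) := by ring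
    _ ≤ ((∑' g, K g ^ t⁻¹) ^ t⁻¹⁻¹ + 1) * ((∑' x, f x ^ a) ^ a⁻¹ * (∑' x, g x ^ b) ^ b⁻¹) := by
        gcongr
        exact le_add_of_nonneg_right zero_le_one

theorem exists_hls_sobolev_exponent {α D p : ℝ} (hα : 0 ≤ α) (hαD : α < D) (hD : 4 < D)
    (hp : (D + α) / (D - 4) < p) :
    ∃ r, 1 < r ∧ 1 + α / D < r⁻¹ + r⁻¹ ∧ 2 * D / (D - 4) < p * r := by
  have hD4 : 0 < D - 4 := sub_pos.mpr hD
  have hp0 : 0 < p := (div_nonneg (by linarith) hD4.le).trans_lt hp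
  have hpD : 2 * D / (D - 4) / p < 2 * D / (D + α) := by
    rw [div_lt_iff₀ hp0, div_lt_iff₀ hD4]
    rw [div_lt_iff₀ hD4] at hp
    rw [div_mul_eq_mul_div, div_mul_eq_mul_div, lt_div_iff₀ (by linarith)]
    nlinarith
  have h1D : 1 < 2 * D / (D + α) := (one_lt_div (by linarith)).mpr (by linarith)
  obtain ⟨r, hr, hrD⟩ := exists_between (max_lt h1D hpD)
  obtain ⟨hr1, hrp⟩ := max_lt_iff.mp hr
  refine ⟨r, hr1, ?_, (div_lt_iff₀' hp0).mp hrp⟩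
  have hr0 : 0 < r := by linarith
  rw [lt_div_iff₀ (by linarith)] at hrD
  have h2 : 1 + α / D < 2 / r := by
    rw [lt_div_iff₀ hr0, one_add_div (by linarith), div_mul_eq_mul_div, div_lt_iff₀ (by linarith)]
    linarith
  rwa [← two_mul, ← div_eq_mul_inv]

end Energy

theorem sobolev_type_inequality_biharmonic_general [Group G]
    (S : Finset G) (hS_gen : Subgroup.closure (S : Set G) = ⊤)
    (hS_sym : ∀ s ∈ S, s⁻¹ ∈ S) (D : ℝ) (hD : 4 < D) (C₁ C₂ : ℝ) (hC₁ : 0 < C₁)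
    (hgrowth : ∀ n : ℕ, 1 ≤ n →
      C₁ * (n : ℝ) ^ D ≤ ballVolume S n ∧ ballVolume S n ≤ C₂ * (n : ℝ) ^ D)
    (α : ℝ) (hα : 0 ≤ α) (hαD : α < D) (R : G → G → ℝ) (hR_nonneg : ∀ x y, 0 ≤ R x y) (c : ℝ)
    (hR_up : ∀ x y : G, x ≠ y → R x y ≤ c * (wordDist S x y : ℝ) ^ (α - D))
    (hR_diag : ∀ x : G, R x x ≤ c) (p : ℝ) (hp : (D + α) / (D - 4) < p) :
    ∃ C : ℝ, 0 < C ∧ ∀ q, 1 ≤ q → ∀ u : G → ℝ, Memlp q u → (Summable fun x => lap S u x ^ 2) →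
      ∑' x, conv R (fun y => |u y| ^ p) x * |u x| ^ p ≤ C * (∑' x, lap S u x ^ 2) ^ p := by
  obtain ⟨r, hr, hrα, hpr⟩ := exists_hls_sobolev_exponent hα hαD hD hp
  obtain ⟨B, hB, hHLS⟩ := exists_hardy_littlewood_sobolev_inequality hS_gen hS_sym (by linarith)
    (fun n hn => (hgrowth n hn).2) hα hR_nonneg hR_up hR_diag hr hr.le hrα
  obtain ⟨A, hA, hsob⟩ := exists_sobolev_inequality hS_gen hS_sym hC₁ hD
    (fun n hn => (hgrowth n hn).1) hpr
  refine ⟨B * A ^ (2 * p), by positivity, fun q hq u hu hlap => ?_⟩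
  set E := ∑' x, lap S u x ^ 2
  have hE : 0 ≤ E := tsum_nonneg fun x => sq_nonneg _
  obtain ⟨hupr, hle⟩ := hsob q hq u hu hlap
  simp only [Memlp, Real.rpow_mul (abs_nonneg _)] at hupr hle
  have hnonneg : 0 ≤ ∑' x, (|u x| ^ p) ^ r := tsum_nonneg fun x => by positivity
  have hnorm : (∑' x, (|u x| ^ p) ^ r) ^ r⁻¹ ≤ (A * √E) ^ p := by
    rwa [Real.rpow_inv_le_iff_of_pos hnonneg (by positivity) (by linarith),
      ← Real.rpow_mul (by positivity)]
  calc ∑' x, conv R (fun y => |u y| ^ p) x * |u x| ^ p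
      ≤ B * ((∑' x, (|u x| ^ p) ^ r) ^ r⁻¹ * (∑' x, (|u x| ^ p) ^ r) ^ r⁻¹) :=
        hHLS _ _ (fun x => by positivity) (fun x => by positivity) hupr hupr
    _ ≤ B * ((A * √E) ^ p * (A * √E) ^ p) := by gcongr
    _ = B * A ^ (2 * p) * E ^ p := by
        rw [← sq, Real.rpow_pow_comm (by positivity), mul_pow, Real.sq_sqrt hE,
          Real.mul_rpow (by positivity) hE, Real.rpow_mul hA.le, Real.rpow_two, mul_assoc]

theorem sobolev_type_inequality_biharmonic
    [Group G] [Countable G]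
    (S : Finset G) (hS_gen : Subgroup.closure (S : Set G) = ⊤)
    (hS_sym : ∀ s ∈ S, s⁻¹ ∈ S) (hS_e : (1 : G) ∉ S)
    (N : ℕ) (hN : 5 ≤ N)
    (C₁ C₂ : ℝ) (hC₁ : 0 < C₁) (hC₂ : 0 < C₂)
    (hgrowth : ∀ n : ℕ, 1 ≤ n →
      C₁ * (n : ℝ) ^ N ≤ (Nat.card {x : G // wordDist S 1 x ≤ n} : ℝ) ∧
      (Nat.card {x : G // wordDist S 1 x ≤ n} : ℝ) ≤ C₂ * (n : ℝ) ^ N)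
    (α : ℝ) (hα : 0 < α) (hαN : α < N)
    (Rα : G → G → ℝ) (hR_nonneg : ∀ x y, 0 ≤ Rα x y)
    (hR_symm : ∀ x y, Rα x y = Rα y x)
    (c₁ c₂ : ℝ) (hc₁ : 0 < c₁) (hc₂ : 0 < c₂)
    (hR_low : ∀ x y : G, x ≠ y → c₁ * (wordDist S x y : ℝ) ^ (α - (N : ℝ)) ≤ Rα x y)
    (hR_up : ∀ x y : G, x ≠ y → Rα x y ≤ c₂ * (wordDist S x y : ℝ) ^ (α - (N : ℝ)))
    (hR_diag : ∀ x : G, Rα x x ≤ c₂)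
    (p : ℝ) (hp : ((N : ℝ) + α) / ((N : ℝ) - 4) < p) :
    ∃ C : ℝ, 0 < C ∧ ∀ u : G → ℝ, MemD22 S N u →
      (∑' x, conv Rα (fun y => |u y| ^ p) x * |u x| ^ p) ≤
        C * (∑' x, (lap S u x) ^ 2) ^ p := by
  have hN' : (4 : ℝ) < N := mod_cast hN
  obtain ⟨C, hC, hle⟩ := sobolev_type_inequality_biharmonic_general S hS_gen hS_sym N hN' C₁ C₂ hC₁
    (by simpa only [ballVolume, Real.rpow_natCast] using hgrowth) α hα.le hαN Rα hR_nonneg c₂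
    hR_up hR_diag p hp
  have hexp : 1 ≤ 2 * (N : ℝ) / (N - 4) := (one_le_div (by linarith)).mpr (by linarith)
  exact ⟨C, hC, fun u hu => hle _ hexp u hu.1 hu.2⟩

end Choquard
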